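/- arXiv:math/0406451 — 7 statements merged into one kernel-verified Lean document; each statement's English description precedes it below -/
import Mathlib

section
/- Let k ≥ 1 and for each i ∈ {1,…,k} let (Y_i, μ_i) be a measurable space equipped with a σ-finite measure; let Y = ∏_{i=1}^k Y_i carry the product measure μ = ⊗_i μ_i. Let {f(·;θ) : θ ∈ Θ} be a family of probability density functions on Y with respect to μ which is complete. Let p : {0,1}^k × Y → [0,1] be a missing-data mechanism, i.e., for each r ∈ {0,1}^k the map y ↦ p(r,y) is measurable and ∑_{r ∈ {0,1}^k} p(r,y) = 1 for every y ∈ Y. For r ∈ {0,1}^k write O(r) = {i : r_i = 1}, write y^{(r)} for the restriction of y to the coordinates in O(r) and y^{(1−r)} for the restriction to the complementary coordinates, identify y with the pair (y^{(r)}, y^{(1−r)}), and let μ^{(r)} and μ^{(1−r)} be the corresponding product measures. Then the following are equivalent: (i) [MAR, up to null sets] for every r ∈ {0,1}^k there is a measurable function h_r on ∏_{i ∈ O(r)} Y_i such that for every θ ∈ Θ, p(r,y)·f(y;θ) = h_r(y^{(r)})·f(y;θ) for μ-almost every y ∈ Y; (ii) [likelihood ignorability] for every r ∈ {0,1}^k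 there is a measurable function w_r on ∏_{i ∈ O(r)} Y_i such that for every θ ∈ Θ, for μ^{(r)}-almost every y^{(r)}, ∫ f((y^{(r)},u);θ)·p(r,(y^{(r)},u)) dμ^{(1−r)}(u) = w_r(y^{(r)}) · ∫ f((y^{(r)},u);θ) dμ^{(1−r)}(u). -/
open MeasureTheory

/-- **Theorem 3.1** (Lu–Copas): for a selection model with a complete response family,
missing at random (MAR) is necessary and sufficient for likelihood ignorability (LIG). -/
theorem mar_iff_lig
    {k : ℕ} (hk : 1 ≤ k)
    {Y : Fin k → Type*} [∀ i, MeasurableSpace (Y i)]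
    (μ : ∀ i, Measure (Y i)) [∀ i, SigmaFinite (μ i)]
    {Θ : Type*} (f : Θ → (∀ i, Y i) → ℝ)
    (hf_meas : ∀ θ, Measurable (f θ))
    (hf_nonneg : ∀ θ y, 0 ≤ f θ y)
    (hf_int : ∀ θ, ∫ y, f θ y ∂(Measure.pi μ) = 1)
    -- completeness of the family {f(·;θ) : θ ∈ Θ}
    (hf_complete : ∀ t : (∀ i, Y i) → ℝ, Measurable t →
      (∀ θ, Integrable (fun y => t y * f θ y) (Measure.pi μ)) →
      (∀ θ, ∫ y, t y * f θ y ∂(Measure.pi μ) = 0) →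
      ∀ θ, ∀ᵐ y ∂(Measure.pi μ), t y * f θ y = 0)
    -- the missing-data mechanism
    (p : (Fin k → Bool) → (∀ i, Y i) → ℝ)
    (hp_meas : ∀ r, Measurable (p r))
    (hp_nonneg : ∀ r y, 0 ≤ p r y) (hp_le_one : ∀ r y, p r y ≤ 1)
    (hp_sum : ∀ y, ∑ r : Fin k → Bool, p r y = 1) :
    -- (i) MAR (up to null sets)  ↔  (ii) LIG
    (∀ r : Fin k → Bool,
        ∃ h : (∀ i : {i // r i = true}, Y i) → ℝ, Measurable h ∧
          ∀ θ, ∀ᵐ y ∂(Measure.pi μ),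
            p r y * f θ y = h (fun i => y i) * f θ y)
      ↔
    (∀ r : Fin k → Bool,
        ∃ w : (∀ i : {i // r i = true}, Y i) → ℝ, Measurable w ∧
          ∀ θ, ∀ᵐ yo ∂(Measure.pi fun i : {i // r i = true} => μ i),
            (∫ u, f θ ((MeasurableEquiv.piEquivPiSubtypeProd Y (fun i => r i = true)).symm (yo, u))
                  * p r ((MeasurableEquiv.piEquivPiSubtypeProd Y
                      (fun i => r i = true)).symm (yo, u))
                ∂(Measure.pi fun i : {i // ¬ r i = true} => μ i))
              = w yo *
                ∫ u, f θ ((MeasurableEquiv.piEquivPiSubtypeProd Y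
                    (fun i => r i = true)).symm (yo, u))
                  ∂(Measure.pi fun i : {i // ¬ r i = true} => μ i)) := by
  have hf_integrable : ∀ θ, Integrable (f θ) (Measure.pi μ) := fun θ =>
    Integrable.of_integral_ne_zero (by rw [hf_int θ]; exact one_ne_zero)
  refine forall_congr' fun r => ?_
  have hmp := measurePreserving_piEquivPiSubtypeProd μ (fun i => r i = true)
  set e := MeasurableEquiv.piEquivPiSubtypeProd Y (fun i => r i = true) with he
  have hmps := hmp.symm
  set μo := Measure.pi fun i : {i // r i = true} => μ i
  set μm := Measure.pi fun i : {i // ¬ r i = true} => μ i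
  have hfst : ∀ yo u, (fun i : {i // r i = true} => e.symm (yo, u) i) = yo := fun yo u =>
    congrArg Prod.fst (e.apply_symm_apply (yo, u))
  have hfi : ∀ θ, Integrable (fun z => f θ (e.symm z)) (μo.prod μm) := fun θ =>
    (hmps.integrable_comp_emb e.symm.measurableEmbedding).2 (hf_integrable θ)
  have hpf : ∀ θ, Integrable (fun z => f θ (e.symm z) * p r (e.symm z)) (μo.prod μm) := by
    intro θ
    refine (hfi θ).mul_bdd (c := 1)
      ((hp_meas r).comp e.symm.measurable).aestronglyMeasurable (ae_of_all _ fun z => ?_)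
    rw [Real.norm_of_nonneg (hp_nonneg _ _)]
    exact hp_le_one _ _
  constructor
  · rintro ⟨h, hh, H⟩
    refine ⟨h, hh, fun θ => ?_⟩
    have h1 := hmps.quasiMeasurePreserving.ae (H θ)
    filter_upwards [Measure.ae_ae_of_ae_prod h1] with yo hyo
    rw [← integral_const_mul]
    refine integral_congr_ae ?_
    filter_upwards [hyo] with u hu
    rw [hfst] at hu
    rw [mul_comm, hu]
  · rintro ⟨w, hw, H⟩
    have hv : Measurable (fun yo => max 0 (min 1 (w yo))) := by fun_prop
    have hv0 : ∀ yo, 0 ≤ max 0 (min 1 (w yo)) := fun yo => le_max_left _ _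
    have hv1 : ∀ yo, max 0 (min 1 (w yo)) ≤ 1 := fun yo =>
      max_le zero_le_one (min_le_left _ _)
    have H' : ∀ θ, ∀ᵐ yo ∂μo, (∫ u, f θ (e.symm (yo, u)) * p r (e.symm (yo, u)) ∂μm)
        = max 0 (min 1 (w yo)) * ∫ u, f θ (e.symm (yo, u)) ∂μm := by
      intro θ
      filter_upwards [H θ, (hfi θ).prod_right_ae, (hpf θ).prod_right_ae] with yo h1 h2 h3
      have hA : 0 ≤ ∫ u, f θ (e.symm (yo, u)) * p r (e.symm (yo, u)) ∂μm :=
        integral_nonneg fun u => mul_nonneg (hf_nonneg _ _) (hp_nonneg _ _)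
      have hAB : ∫ u, f θ (e.symm (yo, u)) * p r (e.symm (yo, u)) ∂μm
          ≤ ∫ u, f θ (e.symm (yo, u)) ∂μm :=
        integral_mono h3 h2 fun u => mul_le_of_le_one_right (hf_nonneg _ _) (hp_le_one _ _)
      generalize (∫ u, f θ (e.symm (yo, u)) * p r (e.symm (yo, u)) ∂μm) = A at *
      generalize (∫ u, f θ (e.symm (yo, u)) ∂μm) = B at *
      rcases (hA.trans hAB).eq_or_lt with hB | hB
      · rw [← hB] at hAB ⊢
        rw [mul_zero]; exact le_antisymm hAB hA
      · have w0 : 0 ≤ w yo := by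
          by_contra hc
          push Not at hc
          nlinarith
        have w1 : w yo ≤ 1 := by
          by_contra hc
          push Not at hc
          nlinarith
        rw [min_eq_right w1, max_eq_right w0, h1]
    obtain ⟨v, hv, hv0, hv1, H'⟩ : ∃ v : (∀ i : {i // r i = true}, Y i) → ℝ, Measurable v ∧
        (∀ yo, 0 ≤ v yo) ∧ (∀ yo, v yo ≤ 1) ∧
        ∀ θ, ∀ᵐ yo ∂μo, (∫ u, f θ (e.symm (yo, u)) * p r (e.symm (yo, u)) ∂μm)
          = v yo * ∫ u, f θ (e.symm (yo, u)) ∂μm := ⟨_, hv, hv0, hv1, H'⟩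
    refine ⟨v, hv, ?_⟩
    have hfm : Measurable (fun y : (∀ i, Y i) => v (fun i : {i // r i = true} => y i)) :=
      hv.comp (by fun_prop)
    have key := hf_complete (fun y => p r y - v (fun i => y i)) ((hp_meas r).sub hfm) ?_ ?_
    · intro θ
      filter_upwards [key θ] with y hy
      linarith
    · intro θ
      refine (hf_integrable θ).bdd_mul (c := 1)
        ((hp_meas r).sub hfm).aestronglyMeasurable (ae_of_all _ fun y => ?_)
      rw [Real.norm_eq_abs, abs_le]
      constructor <;>
        linarith [hp_nonneg r y, hp_le_one r y, hv0 (fun i => y i), hv1 (fun i => y i)]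
    · intro θ
      have hvf : Integrable (fun z => v z.1 * f θ (e.symm z)) (μo.prod μm) := by
        refine (hfi θ).bdd_mul (c := 1)
          (hv.comp measurable_fst).aestronglyMeasurable (ae_of_all _ fun z => ?_)
        rw [Real.norm_of_nonneg (hv0 _)]
        exact hv1 _
      rw [← hmps.integral_comp e.symm.measurableEmbedding]
      have heq : ∀ z : (∀ i : {i // r i = true}, Y i) × (∀ i : {i // ¬ r i = true}, Y i),
          (p r (e.symm z) - v (fun i => e.symm z i)) * f θ (e.symm z)
          = f θ (e.symm z) * p r (e.symm z) - v z.1 * f θ (e.symm z) := by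
        rintro ⟨yo, u⟩
        rw [hfst]; ring
      rw [integral_congr_ae (ae_of_all _ heq), integral_sub (hpf θ) hvf,
        integral_prod _ (hpf θ), integral_prod _ hvf, sub_eq_zero]
      refine integral_congr_ae ?_
      filter_upwards [H' θ] with yo hyo
      rw [hyo, integral_const_mul]
end

section
/- Let μ be a σ-finite measure on a measurable space Y and let {f(·;θ) : θ ∈ Θ} be a complete family of probability density functions on Y with respect to μ. Let z ⊆ Y be a measurable set and let κ : Y → ℝ be a bounded measurable function. Then the following are equivalent: (i) [likelihood ignorability at z] there exists w ∈ ℝ such that for all θ ∈ Θ, ∫_z κ(y) f(y;θ) dμ(y) = w · ∫_z f(y;θ) dμ(y); (ii) [coarsening at random at z, up to null sets] there exists w ∈ ℝ such that for every θ ∈ Θ, κ(y)·f(y;θ) = w·f(y;θ) for μ-almost every y ∈ z. -/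
open MeasureTheory

/-- **Theorem 4.1** (Lu–Copas), stated for a fixed observed coarse set `z`: for a complete
family, likelihood ignorability at `z` is equivalent to coarsening at random at `z`. -/
theorem car_iff_lig
    {Y : Type*} [MeasurableSpace Y] (μ : Measure Y) [SigmaFinite μ]
    {Θ : Type*} (f : Θ → Y → ℝ)
    (hf_meas : ∀ θ, Measurable (f θ))
    (hf_nonneg : ∀ θ y, 0 ≤ f θ y)
    (hf_int : ∀ θ, ∫ y, f θ y ∂μ = 1)
    -- completeness of the family {f(·;θ) : θ ∈ Θ}
    (hf_complete : ∀ t : Y → ℝ, Measurable t →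
      (∀ θ, Integrable (fun y => t y * f θ y) μ) →
      (∀ θ, ∫ y, t y * f θ y ∂μ = 0) →
      ∀ θ, ∀ᵐ y ∂μ, t y * f θ y = 0)
    (z : Set Y) (hz : MeasurableSet z)
    (κ : Y → ℝ) (hκ_meas : Measurable κ) (hκ_bdd : ∃ C : ℝ, ∀ y, |κ y| ≤ C) :
    -- (i) LIG at z  ↔  (ii) CAR at z (up to null sets)
    (∃ w : ℝ, ∀ θ, ∫ y in z, κ y * f θ y ∂μ = w * ∫ y in z, f θ y ∂μ)
      ↔
    (∃ w : ℝ, ∀ θ, ∀ᵐ y ∂μ, y ∈ z → κ y * f θ y = w * f θ y) := by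
  have hfi : ∀ θ, Integrable (f θ) μ := fun θ => by
    by_contra h
    have h1 := hf_int θ
    rw [integral_undef h] at h1
    exact zero_ne_one h1
  obtain ⟨C, hC⟩ := hκ_bdd
  have hκi : ∀ θ, Integrable (fun y => κ y * f θ y) μ := fun θ =>
    (hfi θ).bdd_mul hκ_meas.aestronglyMeasurable (Filter.Eventually.of_forall hC)
  constructor
  · rintro ⟨w, hw⟩
    refine ⟨w, fun θ => ?_⟩
    have heq : ∀ θ, (fun y => z.indicator (fun y => κ y - w) y * f θ y)
        = z.indicator (fun y => κ y * f θ y - w * f θ y) := fun θ => by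
      funext y
      by_cases hy : y ∈ z
      · simp [hy, sub_mul]
      · simp [hy]
    have key := hf_complete (z.indicator (fun y => κ y - w))
      ((hκ_meas.sub_const w).indicator hz)
      (fun θ => by
        rw [heq θ]
        exact ((hκi θ).sub ((hfi θ).const_mul w)).indicator hz)
      (fun θ => by
        rw [heq θ, integral_indicator hz,
          integral_sub (hκi θ).integrableOn ((hfi θ).const_mul w).integrableOn,
          integral_const_mul, hw θ, sub_self]) θ
    filter_upwards [key] with y hy hyz
    simp only [Set.indicator_of_mem hyz, sub_mul] at hy
    linarith
  · rintro ⟨w, hw⟩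
    refine ⟨w, fun θ => ?_⟩
    rw [← integral_const_mul]
    exact setIntegral_congr_ae hz (hw θ)
end

section
/- Let (Y₁, μ₁) and (Y₂, μ₂) be measurable spaces with σ-finite measures, and let {f(·,·;θ) : θ ∈ Θ} be a family of probability density functions on Y₁ × Y₂ with respect to the product measure μ₁ ⊗ μ₂ which is complete. For each θ define the marginal density f₁(y₁;θ) = ∫ f(y₁,y₂;θ) dμ₂(y₂). Then the family of marginal densities {f₁(·;θ) : θ ∈ Θ} on Y₁ is complete with respect to μ₁. -/
open MeasureTheory

/-- **Lemma 3.1(a)** (Lu–Copas): completeness of a joint density family on a product space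
is inherited by the family of marginal densities of the first component. -/
theorem marginal_complete
    {Y₁ Y₂ : Type*} [MeasurableSpace Y₁] [MeasurableSpace Y₂]
    (μ₁ : Measure Y₁) (μ₂ : Measure Y₂) [SigmaFinite μ₁] [SigmaFinite μ₂]
    {Θ : Type*} (f : Θ → Y₁ × Y₂ → ℝ)
    (hf_meas : ∀ θ, Measurable (f θ))
    (hf_nonneg : ∀ θ y, 0 ≤ f θ y)
    (hf_int : ∀ θ, ∫ y, f θ y ∂(μ₁.prod μ₂) = 1)
    -- completeness of the joint family {f(·;θ) : θ ∈ Θ}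
    (hf_complete : ∀ t : Y₁ × Y₂ → ℝ, Measurable t →
      (∀ θ, Integrable (fun y => t y * f θ y) (μ₁.prod μ₂)) →
      (∀ θ, ∫ y, t y * f θ y ∂(μ₁.prod μ₂) = 0) →
      ∀ θ, ∀ᵐ y ∂(μ₁.prod μ₂), t y * f θ y = 0) :
    -- the marginal family f₁(y₁;θ) = ∫ f(y₁,y₂;θ) dμ₂(y₂) is complete
    ∀ t : Y₁ → ℝ, Measurable t →
      (∀ θ, Integrable (fun y₁ => t y₁ * ∫ y₂, f θ (y₁, y₂) ∂μ₂) μ₁) →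
      (∀ θ, ∫ y₁, t y₁ * ∫ y₂, f θ (y₁, y₂) ∂μ₂ ∂μ₁ = 0) →
      ∀ θ, ∀ᵐ y₁ ∂μ₁, t y₁ * ∫ y₂, f θ (y₁, y₂) ∂μ₂ = 0 := by
  intro t ht hint hzero
  have hf : ∀ θ, Integrable (f θ) (μ₁.prod μ₂) := by
    intro θ
    by_contra h
    have h1 := hf_int θ
    rw [integral_undef h] at h1
    exact zero_ne_one h1
  have hprod : ∀ θ, Integrable (fun y : Y₁ × Y₂ => t y.1 * f θ y) (μ₁.prod μ₂) := by
    intro θ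
    have hm : Measurable (fun y : Y₁ × Y₂ => t y.1 * f θ y) :=
      (ht.comp measurable_fst).mul (hf_meas θ)
    rw [integrable_prod_iff hm.aestronglyMeasurable]
    refine ⟨?_, ?_⟩
    · filter_upwards [(hf θ).prod_right_ae] with x hx
      exact hx.const_mul (t x)
    · refine (hint θ).norm.congr (Filter.Eventually.of_forall fun x => ?_)
      have hn : 0 ≤ ∫ y₂, f θ (x, y₂) ∂μ₂ := integral_nonneg fun y => hf_nonneg θ (x, y)
      simp only [norm_mul, Real.norm_of_nonneg (hf_nonneg θ _), Real.norm_of_nonneg hn,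
        integral_const_mul]
  have key := hf_complete (fun y => t y.1) (ht.comp measurable_fst) hprod (by
    intro θ
    rw [integral_prod _ (hprod θ)]
    simp only [integral_const_mul]
    exact hzero θ)
  intro θ
  filter_upwards [Measure.ae_ae_of_ae_prod (key θ)] with x hx
  rw [← integral_const_mul]
  exact integral_eq_zero_of_ae hx
end

section
/- Let (Y₁, μ₁) and (Y₂, μ₂) be measurable spaces with σ-finite measures, and let {f(·,·;θ) : θ ∈ Θ} be a family of probability density functions on Y₁ × Y₂ with respect to the product measure μ₁ ⊗ μ₂ which is complete. Let w : Y₁ × Y₂ → ℝ be measurable and such that for every θ ∈ Θ the function w·f(·,·;θ) is (μ₁ ⊗ μ₂)-integrable and, for μ₁-almost every y₁ ∈ Y₁, ∫ w(y₁,y₂) f(y₁,y₂;θ) dμ₂(y₂) = 0. Then for every θ ∈ Θ, w(y₁,y₂)·f(y₁,y₂;θ) = 0 for (μ₁ ⊗ μ₂)-almost every (y₁,y₂). -/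
open MeasureTheory

/-- **Lemma 3.1(b)** (Lu–Copas): the conditional families of the second component given the
first inherit completeness from the joint family, in the sense that any function whose
conditional integral against the joint density vanishes for a.e. `y₁` and all `θ` must itself
vanish almost everywhere against the joint density. -/
theorem conditional_complete
    {Y₁ Y₂ : Type*} [MeasurableSpace Y₁] [MeasurableSpace Y₂]
    (μ₁ : Measure Y₁) (μ₂ : Measure Y₂) [SigmaFinite μ₁] [SigmaFinite μ₂]
    {Θ : Type*} (f : Θ → Y₁ × Y₂ → ℝ)
    (hf_meas : ∀ θ, Measurable (f θ))
    (hf_nonneg : ∀ θ y, 0 ≤ f θ y)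
    (hf_int : ∀ θ, ∫ y, f θ y ∂(μ₁.prod μ₂) = 1)
    -- completeness of the joint family {f(·;θ) : θ ∈ Θ}
    (hf_complete : ∀ t : Y₁ × Y₂ → ℝ, Measurable t →
      (∀ θ, Integrable (fun y => t y * f θ y) (μ₁.prod μ₂)) →
      (∀ θ, ∫ y, t y * f θ y ∂(μ₁.prod μ₂) = 0) →
      ∀ θ, ∀ᵐ y ∂(μ₁.prod μ₂), t y * f θ y = 0)
    (w : Y₁ × Y₂ → ℝ) (hw_meas : Measurable w)
    (hw_int : ∀ θ, Integrable (fun y => w y * f θ y) (μ₁.prod μ₂))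
    (hw_cond : ∀ θ, ∀ᵐ y₁ ∂μ₁, ∫ y₂, w (y₁, y₂) * f θ (y₁, y₂) ∂μ₂ = 0) :
    ∀ θ, ∀ᵐ y ∂(μ₁.prod μ₂), w y * f θ y = 0 := by
  refine hf_complete w hw_meas hw_int (fun θ => ?_)
  rw [integral_prod _ (hw_int θ), integral_congr_ae (hw_cond θ)]
  simp
end

section
/- Let μ be a σ-finite measure on a measurable space Y, let {f(·;θ) : θ ∈ Θ} be a complete family of probability density functions on Y with respect to μ, and let z ⊆ Y be a measurable set. Then for every measurable t : Y → ℝ such that the function y ↦ t(y)·1_z(y)·f(y;θ) is μ-integrable for every θ and ∫_z t(y) f(y;θ) dμ(y) = 0 for all θ ∈ Θ, one has t(y)·f(y;θ) = 0 for μ-almost every y ∈ z, for every θ ∈ Θ. -/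
open MeasureTheory

/-- Extension of Lemma 3.1 used in the proof of Theorem 4.1 (Lu–Copas): if a family of
densities is complete, then the family of conditional distributions given the event
`y ∈ z` is also complete. -/
theorem restrict_complete
    {Y : Type*} [MeasurableSpace Y] (μ : Measure Y) [SigmaFinite μ]
    {Θ : Type*} (f : Θ → Y → ℝ)
    (hf_meas : ∀ θ, Measurable (f θ))
    (hf_nonneg : ∀ θ y, 0 ≤ f θ y)
    (hf_int : ∀ θ, ∫ y, f θ y ∂μ = 1)
    -- completeness of the family {f(·;θ) : θ ∈ Θ}
    (hf_complete : ∀ t : Y → ℝ, Measurable t →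
      (∀ θ, Integrable (fun y => t y * f θ y) μ) →
      (∀ θ, ∫ y, t y * f θ y ∂μ = 0) →
      ∀ θ, ∀ᵐ y ∂μ, t y * f θ y = 0)
    (z : Set Y) (hz : MeasurableSet z) :
    ∀ t : Y → ℝ, Measurable t →
      (∀ θ, Integrable (fun y => t y * Set.indicator z (fun _ => (1 : ℝ)) y * f θ y) μ) →
      (∀ θ, ∫ y in z, t y * f θ y ∂μ = 0) →
      ∀ θ, ∀ᵐ y ∂μ, y ∈ z → t y * f θ y = 0 := by
  intro t ht hti ht0 θ
  have h := hf_complete (fun y => t y * Set.indicator z (fun _ => (1 : ℝ)) y)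
    (ht.mul (measurable_const.indicator hz)) hti (fun θ => by
      rw [← ht0 θ, ← integral_indicator hz]
      congr 1
      funext y
      by_cases hy : y ∈ z <;> simp [hy]) θ
  filter_upwards [h] with y hy hyz
  simpa only [Set.indicator_of_mem hyz, mul_one] using hy
end

section
/- For θ ∈ ℝ let f_θ(y₁,y₂) = (1/(π√3))·exp(−(2/3)·((y₁−θ)² − (y₁−θ)(y₂−θ/2) + (y₂−θ/2)²)) and let φ_θ(y₁) = (2π)^{−1/2}·exp(−(y₁−θ)²/2). Then for every bounded measurable function h : ℝ² → ℝ, all θ, θ' ∈ ℝ and every y₁ ∈ ℝ: (∫_ℝ h(y₁,y₂) f_θ(y₁,y₂) dy₂)·φ_{θ'}(y₁) = (∫_ℝ h(y₁,y₂) f_{θ'}(y₁,y₂) dy₂)·φ_θ(y₁). -/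
open MeasureTheory Real

/-- The bivariate normal density with mean `(θ, θ/2)` and covariance `[[1,1/2],[1/2,1]]`. -/
noncomputable def binormal (θ : ℝ) (y : ℝ × ℝ) : ℝ :=
  (1 / (π * Real.sqrt 3)) *
    Real.exp (-(2 / 3) * ((y.1 - θ) ^ 2 - (y.1 - θ) * (y.2 - θ / 2) + (y.2 - θ / 2) ^ 2))

/-- The `N(θ,1)` density. -/
noncomputable def normal1 (θ : ℝ) (y₁ : ℝ) : ℝ :=
  (2 * π) ^ (-(1 : ℝ) / 2) * Real.exp (-(y₁ - θ) ^ 2 / 2)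

/-- **Example 3.1** (Lu–Copas): in the (incomplete) bivariate normal family the conditional
expectation of any bounded function of `(y₁, Y₂)` given `Y₁ = y₁` is the same for every `θ`;
hence any missing-data mechanism for `Y₂` is likelihood ignorable without being MAR. -/
theorem binormal_conditional_free_of_theta
    (h : ℝ × ℝ → ℝ) (hh_meas : Measurable h) (hh_bdd : ∃ C : ℝ, ∀ y, |h y| ≤ C) :
    ∀ (θ θ' y₁ : ℝ),
      (∫ y₂ : ℝ, h (y₁, y₂) * binormal θ (y₁, y₂)) * normal1 θ' y₁
        = (∫ y₂ : ℝ, h (y₁, y₂) * binormal θ' (y₁, y₂)) * normal1 θ y₁ := by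
  intro θ θ' y₁
  rw [← integral_mul_const, ← integral_mul_const]
  congr 1
  funext y₂
  have key : ∀ t : ℝ, binormal t (y₁, y₂) = (1 / (π * Real.sqrt 3)) *
      (Real.exp (-(2 / 3) * (y₂ - y₁ / 2) ^ 2) * Real.exp (-(y₁ - t) ^ 2 / 2)) := by
    intro t
    unfold binormal
    rw [← Real.exp_add]
    congr 2
    ring
  rw [key, key]
  unfold normal1
  ring
end

section
/- Let μ be a σ-finite measure on a measurable space Y, let {f(·;θ) : θ ∈ Θ} be a complete family of probability density functions on Y with respect to μ, and let π : Y → [0,1] be measurable (π(y) is the probability that the single observation is missing given Y = y). Then the following are equivalent: (i) [likelihood ignorability] there exists c ∈ ℝ such that ∫_Y π(y) f(y;θ) dμ(y) = c for all θ ∈ Θ; (ii) [missing completely at random, up to null sets] there exists c ∈ ℝ such that for every θ ∈ Θ, π(y)·f(y;θ) = c·f(y;θ) for μ-almost every y ∈ Y. -/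
open MeasureTheory

/-- **Remark 5.4** (Lu–Copas): for a scalar response with complete density family,
likelihood ignorability is equivalent to missing completely at random. -/
theorem lig_iff_mcar
    {Y : Type*} [MeasurableSpace Y] (μ : Measure Y) [SigmaFinite μ]
    {Θ : Type*} (f : Θ → Y → ℝ)
    (hf_meas : ∀ θ, Measurable (f θ))
    (hf_nonneg : ∀ θ y, 0 ≤ f θ y)
    (hf_int : ∀ θ, ∫ y, f θ y ∂μ = 1)
    -- completeness of the family {f(·;θ) : θ ∈ Θ}
    (hf_complete : ∀ t : Y → ℝ, Measurable t →
      (∀ θ, Integrable (fun y => t y * f θ y) μ) →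
      (∀ θ, ∫ y, t y * f θ y ∂μ = 0) →
      ∀ θ, ∀ᵐ y ∂μ, t y * f θ y = 0)
    -- π(y) : probability that the observation is missing given Y = y
    (π : Y → ℝ) (hπ_meas : Measurable π)
    (hπ_nonneg : ∀ y, 0 ≤ π y) (hπ_le_one : ∀ y, π y ≤ 1) :
    -- (i) LIG  ↔  (ii) MCAR (up to null sets)
    (∃ c : ℝ, ∀ θ, ∫ y, π y * f θ y ∂μ = c)
      ↔
    (∃ c : ℝ, ∀ θ, ∀ᵐ y ∂μ, π y * f θ y = c * f θ y) := by
  have hfi : ∀ θ, Integrable (f θ) μ := fun θ => by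
    by_contra h
    have h1 := hf_int θ
    rw [integral_undef h] at h1
    exact zero_ne_one h1
  have hpi : ∀ θ, Integrable (fun y => π y * f θ y) μ := fun θ => by
    refine (hfi θ).mono (hπ_meas.mul (hf_meas θ)).aestronglyMeasurable
      (Filter.Eventually.of_forall fun y => ?_)
    rw [Real.norm_of_nonneg (mul_nonneg (hπ_nonneg y) (hf_nonneg θ y)),
      Real.norm_of_nonneg (hf_nonneg θ y)]
    exact mul_le_of_le_one_left (hf_nonneg θ y) (hπ_le_one y)
  constructor
  · rintro ⟨c, hc⟩
    refine ⟨c, fun θ => ?_⟩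
    have key := hf_complete (fun y => π y - c) (hπ_meas.sub_const c)
      (fun θ => by
        simp only [sub_mul]
        exact (hpi θ).sub ((hfi θ).const_mul c))
      (fun θ => by
        simp only [sub_mul]
        rw [integral_sub (hpi θ) ((hfi θ).const_mul c), integral_const_mul, hc θ, hf_int θ]
        ring) θ
    filter_upwards [key] with y hy
    linarith [sub_mul (π y) c (f θ y)]
  · rintro ⟨c, hc⟩
    refine ⟨c, fun θ => ?_⟩
    rw [integral_congr_ae (hc θ), integral_const_mul, hf_int θ, mul_one]
end
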